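/- Let K be a field, let σ : R → R' be a K-algebra homomorphism between parameter K-algebras (R, 𝔪) and (R', 𝔪'), let C be a commutative K-algebra, and let (A, {−,−}, π) be a Poisson R-deformation of C. Let A' := lim_i ((R'/𝔪'^{i+1}) ⊗_R A), a commutative R'-algebra that is flat and 𝔪'-adically complete, with canonical augmentation to C. Then A' carries a unique R'-bilinear Poisson bracket (antisymmetric, Jacobi, a derivation in each argument) such that the canonical homomorphism A → A' preserves brackets, and with this bracket A' is a Poisson R'-deformation of C. -/

import Mathlib

/-!
`A'` is the `𝔪'`-adic completion of the flat `R'`-module `R' ⊗_R A` (`bcEquiv`); the level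
`(R'/𝔪'^{i+1}) ⊗_R A` is its reduction modulo `𝔪'^{i+1}`.

*Completeness* holds because `𝔪'` is finitely generated. This also shows that an element of `A'`
vanishing at level `i` lies in `𝔪'^{i+1} A'` (`bc_mem_smul_of_apply_eq_zero`), a fact used again for
the augmentation and for uniqueness.

*Flatness* is the statement that over a noetherian ring the adic completion of a flat module is
flat, even when the module is not finitely generated (`flat_adicCompletion`). The Artin–Rees lemma
for maps of finite free modules remains valid after tensoring with a flat module
(`artinRees_lTensor`), so completion preserves exactness of the resulting sequences
(`adicCompletion_map_exact`), and the equational criterion for flatness applies.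

*The bracket* is the limit of the base-changed brackets `(s ⊗ a, t ⊗ b) ↦ st ⊗ {a, b}`, which are
compatible with the transition maps (`brExt_map`). It is unique because an `R'`-bilinear operation
maps `𝔪'^{i+1} A'` to elements vanishing at level `i`, so it is determined at each level by its
values on pairs `(ρ a, ρ b)` (`induced_apply_of_right`, `induced_eq_bcBracket`).

*The augmentation* is the projection to level zero, followed by the isomorphism of
`(R'/𝔪') ⊗_R A = K ⊗_R A` with `A/𝔪A = C` (`exists_augmentation`). Its kernel is `𝔪'A'` by the fact
above, and brackets vanish under it because `π {a, b} = 0`.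
-/

set_option synthInstance.maxHeartbeats 1000000
set_option maxHeartbeats 1000000

open IsLocalRing TensorProduct

variable (R : Type) [CommRing R]
variable (R' : Type) [CommRing R'] [IsLocalRing R'] [Algebra R R']
variable (A : Type) [CommRing A] [Algebra R A]

/-- The level-`i` piece `(R'/𝔪'^{i+1}) ⊗_R A` of `A' = lim_i (R'/𝔪'^{i+1}) ⊗_R A`. -/
abbrev BCLevel (i : ℕ) : Type := (R' ⧸ (maximalIdeal R' ^ (i + 1))) ⊗[R] A

/-- The transition homomorphism `(R'/𝔪'^{i+2}) ⊗_R A → (R'/𝔪'^{i+1}) ⊗_R A`. -/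
noncomputable def bcTransition (i : ℕ) :
    BCLevel R R' A (i + 1) →ₐ[R] BCLevel R R' A i :=
  Algebra.TensorProduct.map
    (Ideal.Quotient.liftₐ (maximalIdeal R' ^ (i + 1 + 1))
      (Ideal.Quotient.mkₐ R (maximalIdeal R' ^ (i + 1)))
      (fun a ha => by
        rw [Ideal.Quotient.mkₐ_eq_mk, Ideal.Quotient.eq_zero_iff_mem]
        exact Ideal.pow_le_pow_right (Nat.le_succ _) ha))
    (AlgHom.id R A)

/-- The inverse limit `A' := lim_i (R'/𝔪'^{i+1}) ⊗_R A`, realized as the subring of compatible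
sequences in the product of the `(R'/𝔪'^{i+1}) ⊗_R A`. -/
noncomputable def bcLimit : Subring (∀ i, BCLevel R R' A i) where
  carrier := {f | ∀ i, bcTransition R R' A i (f (i + 1)) = f i}
  mul_mem' := by
    intro a b ha hb i
    simp only [Pi.mul_apply, map_mul]
    rw [ha i, hb i]
  add_mem' := by
    intro a b ha hb i
    simp only [Pi.add_apply, map_add]
    rw [ha i, hb i]
  one_mem' := by
    intro i
    simp only [Pi.one_apply, map_one]
  zero_mem' := by
    intro i
    simp only [Pi.zero_apply, map_zero]
  neg_mem' := by
    intro a ha i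
    simp only [Pi.neg_apply, map_neg]
    rw [ha i]

/-- `Q` is an `R'`-bilinear Poisson bracket (antisymmetric, Jacobi, a derivation in each
argument) on `A' = lim_i (R'/𝔪'^{i+1}) ⊗_R A` such that the canonical homomorphism
`ρ : A → A'` sends the given bracket `P` of `A` to `Q`.  (`R'`-bilinearity is expressed through
the structural homomorphism `θ : R' → A'`.) -/
def IsInducedPoissonBracket {R R' A : Type} [CommRing R] [CommRing R'] [IsLocalRing R']
    [Algebra R R'] [CommRing A] [Algebra R A]
    (θ : R' →+* ↥(bcLimit R R' A)) (ρ : A →+* ↥(bcLimit R R' A))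
    (P : A → A → A)
    (Q : ↥(bcLimit R R' A) → ↥(bcLimit R R' A) → ↥(bcLimit R R' A)) : Prop :=
  (∀ x y z, Q (x + y) z = Q x z + Q y z) ∧
  (∀ x y z, Q x (y + z) = Q x y + Q x z) ∧
  (∀ (r' : R') (x y), Q (θ r' * x) y = θ r' * Q x y) ∧
  (∀ (r' : R') (x y), Q x (θ r' * y) = θ r' * Q x y) ∧
  (∀ x y, Q x y = - Q y x) ∧
  (∀ x y z, Q x (Q y z) + Q y (Q z x) + Q z (Q x y) = 0) ∧
  (∀ x y z, Q (x * y) z = Q x z * y + x * Q y z) ∧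
  (∀ x y z, Q x (y * z) = Q x y * z + y * Q x z) ∧
  (∀ a b : A, ρ (P a b) = Q (ρ a) (ρ b))

/-! ### Flatness of completions of flat modules -/

section Flat
variable {S : Type} [CommRing S] (I : Ideal S)

lemma mem_smul_top_of_mem {M : Type} [AddCommGroup M] [Module S M] (J : Ideal S)
    (B : Type) [AddCommGroup B] [Module S B] (b : B) (u : M)
    (hu : u ∈ (J • ⊤ : Submodule S M)) : b ⊗ₜ[S] u ∈ (J • ⊤ : Submodule S (B ⊗[S] M)) := by
  induction hu using Submodule.smul_induction_on' with
  | smul r hr m _ => rw [tmul_smul]; exact Submodule.smul_mem_smul hr trivial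
  | add x _ y _ hx hy => rw [tmul_add]; exact add_mem hx hy

/-- The Artin–Rees lemma after tensoring with a flat (not necessarily finite) module `B`:
if `1 ⊗ f` maps `z` into `I ^ (n + c) • (B ⊗ N)`, then its image already comes from
`I ^ n • (B ⊗ M)`. Flatness identifies the kernel of `B ⊗ M → B ⊗ N / I ^ (n + c) N` with the
image of `B ⊗ ker (M → N / I ^ (n + c) N)`, so everything reduces to `f` itself. -/
lemma artinRees_lTensor [IsNoetherianRing S] (B : Type) [AddCommGroup B] [Module S B]
    [Module.Flat S B] {M N : Type} [AddCommGroup M] [Module S M] [AddCommGroup N] [Module S N]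
    [Module.Finite S N] (f : M →ₗ[S] N) :
    ∃ c : ℕ, ∀ n, ∀ z : B ⊗[S] M, f.lTensor B z ∈ (I ^ (n + c) • ⊤ : Submodule S (B ⊗[S] N)) →
      ∃ e ∈ (I ^ n • ⊤ : Submodule S (B ⊗[S] M)), f.lTensor B e = f.lTensor B z := by
  obtain ⟨c, hc⟩ := Ideal.exists_pow_inf_eq_pow_smul I (LinearMap.range f)
  refine ⟨c, fun n z hz => ?_⟩
  let J := I ^ (n + c)
  let q : N →ₗ[S] N ⧸ (J • ⊤ : Submodule S N) := Submodule.mkQ _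
  have hkill : ∀ t ∈ (J • ⊤ : Submodule S (B ⊗[S] N)), q.lTensor B t = 0 := by
    intro t ht
    induction ht using Submodule.smul_induction_on' with
    | smul r hr m _ =>
      rw [map_smul]
      induction m with
      | zero => simp
      | tmul b m =>
        rw [LinearMap.lTensor_tmul, ← tmul_smul, ← map_smul,
          show q (r • m) = 0 from (Submodule.Quotient.mk_eq_zero (J • ⊤ : Submodule S N)).2
            (Submodule.smul_mem_smul hr trivial), tmul_zero]
      | add x y hx hy => rw [map_add, smul_add, hx trivial, hy trivial, add_zero]
    | add x _ y _ hx hy => rw [map_add, hx, hy, add_zero]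
  -- By flatness `z` comes from `B ⊗ κ`, and on `κ` the classical Artin–Rees lemma applies.
  let κ := LinearMap.ker (q ∘ₗ f)
  have hex := Module.Flat.lTensor_exact (R := S) B (q ∘ₗ f).exact_subtype_ker_map
  obtain ⟨w, rfl⟩ := (hex z).1 (by rw [LinearMap.lTensor_comp_apply]; exact hkill _ hz)
  clear hz hex
  induction w with
  | zero => exact ⟨0, zero_mem _, by simp⟩
  | add x y hx hy =>
    obtain ⟨e, he, he'⟩ := hx
    obtain ⟨d, hd, hd'⟩ := hy
    exact ⟨e + d, add_mem he hd, by simp only [map_add, he', hd']⟩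
  | tmul b u =>
    have hu : f u ∈ (I ^ (n + c) • ⊤ : Submodule S N) ⊓ LinearMap.range f :=
      ⟨(Submodule.Quotient.mk_eq_zero (J • ⊤ : Submodule S N)).1 u.2, u, rfl⟩
    rw [hc (n + c) (Nat.le_add_left _ _), Nat.add_sub_cancel] at hu
    have hu2 := smul_mono_right (I ^ n) (inf_le_right : I ^ c • ⊤ ⊓ LinearMap.range f ≤ _) hu
    rw [← Submodule.map_top, ← Submodule.map_smul''] at hu2
    obtain ⟨v, hv, hfv⟩ := hu2
    exact ⟨b ⊗ₜ v, mem_smul_top_of_mem _ B b v hv, by simp [hfv]⟩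

/-- Exactness in the middle survives `I`-adic completion when both maps satisfy an
Artin–Rees estimate in the form proved by `artinRees_lTensor`. No finiteness of the modules is
needed. -/
lemma adicCompletion_map_exact {M N P : Type} [AddCommGroup M] [Module S M] [AddCommGroup N]
    [Module S N] [AddCommGroup P] [Module S P] (f : M →ₗ[S] N) (g : N →ₗ[S] P)
    (hfg : Function.Exact f g) (c d : ℕ)
    (hf : ∀ n z, f z ∈ (I ^ (n + c) • ⊤ : Submodule S N) →
      ∃ e ∈ (I ^ n • ⊤ : Submodule S M), f e = f z)
    (hg : ∀ n z, g z ∈ (I ^ (n + d) • ⊤ : Submodule S P) →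
      ∃ e ∈ (I ^ n • ⊤ : Submodule S N), g e = g z)
    (x : AdicCompletion I N) (hx : AdicCompletion.map I g x = 0) :
    ∃ y, AdicCompletion.map I f y = x := by
  induction x using AdicCompletion.induction_on with | _ b
  have hb (n : ℕ) : g (b n) ∈ (I ^ n • ⊤ : Submodule S P) := by
    simpa using congrArg (fun x ↦ x.val n) hx
  have hbc {m n : ℕ} (h : m ≤ n) : b n - b m ∈ (I ^ m • ⊤ : Submodule S N) := by
    rw [← Submodule.Quotient.eq]
    exact AdicCompletion.AdicCauchySequence.mk_eq_mk h b
  have hmono {m n : ℕ} (h : m ≤ n) : (I ^ n • ⊤ : Submodule S N) ≤ I ^ m • ⊤ :=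
    Submodule.smul_mono_left (Ideal.pow_le_pow_right h)
  have h1 (n : ℕ) : ∃ y, f y - b n ∈ (I ^ n • ⊤ : Submodule S N) := by
    obtain ⟨e, he, he'⟩ := hg n (b (n + d)) (hb _)
    obtain ⟨y, hy⟩ := (hfg (b (n + d) - e)).1 (by rw [map_sub, he', sub_self])
    refine ⟨y, ?_⟩
    rw [hy, sub_right_comm]
    exact sub_mem (hbc (Nat.le_add_right _ _)) he
  -- The lifts `y n` need not form a Cauchy sequence, but `f (y (n + 1 + c) - y (n + c))` is small,
  -- so the estimate for `f` provides small corrections `e n` with the same image. Their partial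
  -- sums `w` are Cauchy.
  choose y hy using h1
  have h2 (n : ℕ) : ∃ e ∈ (I ^ n • ⊤ : Submodule S M),
      f e = f (y (n + 1 + c) - y (n + c)) := by
    refine hf n _ ?_
    have e1 := hmono (show n + c ≤ n + 1 + c by lia) (hy (n + 1 + c))
    have e2 := hy (n + c)
    have e3 := hbc (show n + c ≤ n + 1 + c by lia)
    have := sub_mem (add_mem e1 e3) e2
    rw [map_sub]
    convert this using 1
    abel
  choose e he he' using h2
  let w : ℕ → M := fun n => y c + ∑ i ∈ Finset.range n, e i
  have hw (n : ℕ) : f (w n) = f (y (n + c)) := by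
    induction n with
    | zero => simp [w]
    | succ n ih =>
      have : w (n + 1) = w n + e n := by simp [w, Finset.sum_range_succ, add_assoc]
      rw [this, map_add, ih, he', map_sub]
      abel
  refine ⟨AdicCompletion.mk I M (AdicCompletion.AdicCauchySequence.mk I M w fun n => ?_), ?_⟩
  · rw [SModEq.comm, SModEq.sub_mem]
    simpa [w, Finset.sum_range_succ, add_assoc] using he n
  · ext n
    have h3 : f (w n) - b n ∈ (I ^ n • ⊤ : Submodule S N) := by
      rw [hw, ← sub_add_sub_cancel _ (b (n + c))]
      exact add_mem (hmono (Nat.le_add_right _ _) (hy _)) (hbc (Nat.le_add_right _ _))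
    simpa using (Submodule.Quotient.eq _).2 h3

/-- Completion is linear in the map being completed; stated for linear combinations because
`AdicCompletion.map` is not bundled as a linear map in its second argument. -/
lemma adicCompletion_map_sum_smul {M N ι : Type} [Fintype ι] [AddCommGroup M] [Module S M]
    [AddCommGroup N] [Module S N] (a : ι → S) (F : ι → M →ₗ[S] N) (y : AdicCompletion I M) :
    AdicCompletion.map I (∑ i, a i • F i) y = ∑ i, a i • AdicCompletion.map I (F i) y := by
  induction y using AdicCompletion.induction_on with | _ b
  ext n
  simp only [AdicCompletion.val_sum_apply, AdicCompletion.map_mk, AdicCompletion.mk_apply_coe,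
    AdicCompletion.AdicCauchySequence.map_apply_coe, LinearMap.sum_apply, map_sum]
  exact Finset.sum_congr rfl fun _ _ => rfl

/-- Over a noetherian ring the `I`-adic completion of a flat module is flat. By the equational
criterion it suffices to trivialise a relation `∑ r j • x j = 0`. Let `g : S^k → S^l` generate the
syzygies of `r`. The sequence `B ⊗ S^k → B ⊗ S^l → B ⊗ S` is exact and stays exact after
completion, and a preimage of `(x j)` in the completion of `B ⊗ S^k` trivialises the relation. -/
theorem flat_adicCompletion [IsNoetherianRing S] (B : Type) [AddCommGroup B] [Module S B]
    [Module.Flat S B] : Module.Flat S (AdicCompletion I B) := by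
  refine Module.Flat.of_forall_isTrivialRelation fun {l r x} hrx => ?_
  let φ : (Fin l → S) →ₗ[S] S := Fintype.linearCombination S r
  obtain ⟨k, γ, hγ⟩ := Module.Finite.exists_fin' S (LinearMap.ker φ)
  let g : (Fin k → S) →ₗ[S] (Fin l → S) := (LinearMap.ker φ).subtype ∘ₗ γ
  have hgφ : Function.Exact g φ := by
    intro v
    constructor
    · intro hv
      obtain ⟨u, hu⟩ := hγ ⟨v, hv⟩
      exact ⟨u, by simp [g, hu]⟩
    · rintro ⟨u, rfl⟩
      exact (γ u).2
  obtain ⟨c, hc⟩ := artinRees_lTensor I B g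
  obtain ⟨d, hd⟩ := artinRees_lTensor I B φ
  -- `ι j` is the inclusion of the `j`-th coordinate in `B ⊗ S^l ≃ B^l`, and `p m j` is the `j`-th
  -- projection from `B ⊗ S^m`.
  let ι (j : Fin l) : B →ₗ[S] B ⊗[S] (Fin l → S) := (TensorProduct.mk S B _).flip (Pi.single j 1)
  let p (m : ℕ) (j : Fin m) : B ⊗[S] (Fin m → S) →ₗ[S] B :=
    (TensorProduct.rid S B).toLinearMap ∘ₗ (LinearMap.proj j : (Fin m → S) →ₗ[S] S).lTensor B
  let X : AdicCompletion I (B ⊗[S] (Fin l → S)) := ∑ j, AdicCompletion.map I (ι j) (x j)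
  have hX : AdicCompletion.map I (φ.lTensor B) X = 0 := by
    -- The sum over `Unit` brings `r j • _` into the shape of `adicCompletion_map_sum_smul`.
    have h (j : Fin l) : φ.lTensor B ∘ₗ ι j =
        ∑ _i : Unit, r j • (TensorProduct.mk S B S).flip 1 := by
      ext b
      simp [ι, φ, ← tmul_smul]
    simp only [X, map_sum, AdicCompletion.map_comp_apply, h, adicCompletion_map_sum_smul]
    simp only [Finset.univ_unique, Finset.sum_singleton]
    have := congrArg ((AdicCompletion.map I ((TensorProduct.mk S B S).flip 1)).restrictScalars S) hrx
    simpa only [map_sum, map_smul, map_zero, LinearMap.coe_restrictScalars] using this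
  obtain ⟨Y, hY⟩ := adicCompletion_map_exact I _ _ (Module.Flat.lTensor_exact B hgφ) c d hc hd X hX
  refine ⟨k, fun j i => g (Pi.single i 1) j, fun i => AdicCompletion.map I (p k i) Y, fun j => ?_,
    fun i => ?_⟩
  · have h1 : AdicCompletion.map I (p l j) X = x j := by
      have h (i : Fin l) : p l j ∘ₗ ι i =
          ∑ _i : Unit, (if i = j then 1 else 0 : S) • LinearMap.id := by
        ext b
        simp only [ι, p, eq_comm]
        split_ifs <;> simp_all
      simp only [X, map_sum, AdicCompletion.map_comp_apply, h, adicCompletion_map_sum_smul]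
      simp
    have h2 : p l j ∘ₗ g.lTensor B = ∑ i, g (Pi.single i 1) j • p k i := by
      ext b i
      simp [p, LinearMap.sum_apply, Pi.single_apply]
    rw [← h1, ← hY, AdicCompletion.map_comp_apply, h2, adicCompletion_map_sum_smul]
  · have := (hgφ (g (Pi.single i 1))).2 ⟨_, rfl⟩
    simpa [φ, Fintype.linearCombination_apply, mul_comm] using this
end Flat

/-! ### The limit as an adic completion -/

section BaseChange

/-- `(R'/𝔪'^{n+1}) ⊗_R A` as the quotient of `R' ⊗_R A` by `𝔪'^{n+1}`. -/
noncomputable def bcE (n : ℕ) : BCLevel R R' A n ≃ₗ[R']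
    (R' ⊗[R] A) ⧸ (maximalIdeal R' ^ (n + 1) • ⊤ : Submodule R' (R' ⊗[R] A)) :=
  (AlgebraTensorModule.cancelBaseChange R R' R' (R' ⧸ maximalIdeal R' ^ (n + 1)) A).symm ≪≫ₗ
    quotTensorEquivQuotSMul (R' ⊗[R] A) (maximalIdeal R' ^ (n + 1))

/-- The projection `R' ⊗_R A → (R'/𝔪'^{n+1}) ⊗_R A`. -/
noncomputable def bcT (n : ℕ) : (R' ⊗[R] A) →ₗ[R'] BCLevel R R' A n :=
  (bcE R R' A n).symm.toLinearMap ∘ₗ Submodule.mkQ _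

lemma bcT_tmul (n : ℕ) (r : R') (a : A) :
    bcT R R' A n (r ⊗ₜ a) = (Ideal.Quotient.mk (maximalIdeal R' ^ (n + 1)) r) ⊗ₜ[R] a := by
  simp only [bcT, LinearMap.comp_apply, LinearEquiv.coe_coe, LinearEquiv.symm_apply_eq, bcE,
    LinearEquiv.trans_apply, AlgebraTensorModule.cancelBaseChange_symm_tmul,
    quotTensorEquivQuotSMul_mk_tmul, Submodule.mkQ_apply, smul_tmul', smul_eq_mul, mul_one]

lemma bcT_surjective (n : ℕ) : Function.Surjective (bcT R R' A n) :=
  (bcE R R' A n).symm.surjective.comp (Submodule.mkQ_surjective _)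

lemma bcT_eq_zero_iff (n : ℕ) (b : R' ⊗[R] A) : bcT R R' A n b = 0 ↔
    b ∈ (maximalIdeal R' ^ (n + 1) • ⊤ : Submodule R' (R' ⊗[R] A)) := by
  simp [bcT]

lemma bcTransition_mk_tmul (n : ℕ) (r : R') (a : A) :
    bcTransition R R' A n ((Ideal.Quotient.mk (maximalIdeal R' ^ (n + 1 + 1)) r) ⊗ₜ[R] a) =
      (Ideal.Quotient.mk (maximalIdeal R' ^ (n + 1)) r) ⊗ₜ[R] a := rfl

lemma bcTransition_bcT (n : ℕ) (b : R' ⊗[R] A) :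
    bcTransition R R' A n (bcT R R' A (n + 1) b) = bcT R R' A n b := by
  induction b with
  | zero => simp
  | tmul r a => rw [bcT_tmul, bcT_tmul, bcTransition_mk_tmul]
  | add x y hx hy => simp only [map_add, hx, hy]

/-- The structural homomorphism `R' → A'`, with components `r' ↦ r' ⊗ 1`. -/
noncomputable def bcθ : R' →+* ↥(bcLimit R R' A) :=
  (RingHom.pi fun i => algebraMap R' (BCLevel R R' A i)).codRestrict (bcLimit R R' A) fun r i =>
    bcTransition_mk_tmul R R' A i r 1

/-- The canonical homomorphism `A → A'`, with components `a ↦ 1 ⊗ a`. -/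
noncomputable def bcρ : A →+* ↥(bcLimit R R' A) :=
  (RingHom.pi fun i => (Algebra.TensorProduct.includeRight :
    A →ₐ[R] BCLevel R R' A i).toRingHom).codRestrict (bcLimit R R' A) fun a i =>
    bcTransition_mk_tmul R R' A i 1 a

lemma bcθ_apply (r : R') (i : ℕ) : (bcθ R R' A r : ∀ j, BCLevel R R' A j) i =
    (Ideal.Quotient.mk (maximalIdeal R' ^ (i + 1)) r) ⊗ₜ[R] (1 : A) := rfl

lemma bcρ_apply (a : A) (i : ℕ) : (bcρ R R' A a : ∀ j, BCLevel R R' A j) i =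
    (1 : R' ⧸ (maximalIdeal R' ^ (i + 1))) ⊗ₜ[R] a := rfl

/-- The `R'`-module structure on `A'` through `bcθ`; a reducible `Module.compHom`, so that it
agrees by definition with the structure used in the theorem. -/
noncomputable abbrev bcModule : Module R' ↥(bcLimit R R' A) := Module.compHom _ (bcθ R R' A)

attribute [local instance] bcModule

lemma bc_smul_def (r : R') (x : ↥(bcLimit R R' A)) : r • x = bcθ R R' A r * x := rfl

lemma bc_smul_apply (r : R') (x : ↥(bcLimit R R' A)) (i : ℕ) :
    (r • x : ↥(bcLimit R R' A)).1 i = r • x.1 i := by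
  exact (Algebra.smul_def r (x.1 i)).symm

/-- The comparison map from the `𝔪'`-adic completion of `R' ⊗_R A` to `A'`. Level `i` of `A'`
is the quotient by `𝔪'^{i+1}`, so it corresponds to component `i + 1` of the completion. -/
noncomputable def bcToLimit :
    AdicCompletion (maximalIdeal R') (R' ⊗[R] A) →ₗ[R'] ↥(bcLimit R R' A) where
  toFun x := ⟨fun i => (bcE R R' A i).symm (x.val (i + 1)), fun i => by
    induction x using AdicCompletion.induction_on with | _ b
    change bcTransition R R' A i (bcT R R' A (i + 1) (b (i + 1 + 1))) = bcT R R' A i (b (i + 1))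
    rw [bcTransition_bcT, ← sub_eq_zero, ← map_sub, bcT_eq_zero_iff,
      ← Submodule.Quotient.eq]
    exact AdicCompletion.AdicCauchySequence.mk_eq_mk (Nat.le_succ _) b⟩
  map_add' x y := Subtype.ext <| funext fun i => map_add (bcE R R' A i).symm _ _
  map_smul' r x := Subtype.ext <| funext fun i => by
    rw [RingHom.id_apply, bc_smul_apply]
    exact map_smul (bcE R R' A i).symm _ _

lemma bcToLimit_apply (x : AdicCompletion (maximalIdeal R') (R' ⊗[R] A)) (i : ℕ) :
    (bcToLimit R R' A x).1 i = (bcE R R' A i).symm (x.val (i + 1)) := rfl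

lemma bcToLimit_bijective : Function.Bijective (bcToLimit R R' A) := by
  constructor
  · rw [injective_iff_map_eq_zero]
    intro x hx
    have h (i : ℕ) : x.val (i + 1) = 0 := by
      have := congrFun (congrArg Subtype.val hx) i
      rwa [bcToLimit_apply, ZeroMemClass.coe_zero, Pi.zero_apply,
        LinearEquiv.map_eq_zero_iff] at this
    ext n
    rw [← AdicCompletion.transitionMap_comp_eval_apply _ _ (Nat.le_succ n) x,
      show x.val n.succ = 0 from h n, map_zero]
    rfl
  · intro f
    choose t ht using fun i => bcT_surjective R R' A i (f.1 i)
    refine ⟨AdicCompletion.mk _ _ (AdicCompletion.AdicCauchySequence.mk _ _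
      (fun n => t n) fun n => ?_), Subtype.ext <| funext fun i => ?_⟩
    · cases n with
      -- Modulo `𝔪'^0` there is nothing to prove; `A'` has no component for this level.
      | zero =>
        rw [pow_zero, Ideal.one_eq_top, Submodule.top_smul]
        exact SModEq.top
      | succ n =>
        rw [SModEq.sub_mem, ← bcT_eq_zero_iff, map_sub, ← bcTransition_bcT R R' A n (t (n + 1)),
          ht, f.2, ← bcTransition_bcT R R' A n (t (n + 1 + 1)),
          ← bcTransition_bcT R R' A (n + 1) (t (n + 1 + 1)), ht, f.2, f.2, sub_self]
    · change bcT R R' A i (t (i + 1)) = f.1 i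
      rw [← bcTransition_bcT, ht, f.2]

/-- `A'` is the `𝔪'`-adic completion of `R' ⊗_R A`, as an `R'`-module. -/
noncomputable def bcEquiv :
    AdicCompletion (maximalIdeal R') (R' ⊗[R] A) ≃ₗ[R'] ↥(bcLimit R R' A) :=
  LinearEquiv.ofBijective _ (bcToLimit_bijective R R' A)

theorem bc_flat [IsNoetherianRing R'] [Module.Flat R A] : Module.Flat R' ↥(bcLimit R R' A) :=
  have := flat_adicCompletion (maximalIdeal R') (R' ⊗[R] A)
  Module.Flat.of_linearEquiv (bcEquiv R R' A).symm

/-- Since `𝔪'` is finitely generated, the completion of any `R'`-module is complete; this is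
transported along `bcEquiv`. -/
theorem bc_complete [IsNoetherianRing R'] :
    IsAdicComplete (maximalIdeal R') ↥(bcLimit R R' A) := by
  have h := AdicCompletion.isAdicComplete (M := R' ⊗[R] A) (I := maximalIdeal R')
    (IsNoetherian.noetherian _)
  have hc : AdicCompletion.of (maximalIdeal R') ↥(bcLimit R R' A) =
      (AdicCompletion.congr (maximalIdeal R') (bcEquiv R R' A)).toLinearMap.restrictScalars R' ∘ₗ
      AdicCompletion.of _ _ ∘ₗ (bcEquiv R R' A).symm.toLinearMap := by
    ext x : 1
    simp [AdicCompletion.map_of]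
  rw [← AdicCompletion.of_bijective_iff] at h ⊢
  rw [hc]
  exact (AdicCompletion.congr (maximalIdeal R') (bcEquiv R R' A)).bijective.comp
    (h.comp (bcEquiv R R' A).symm.bijective)

/-- The kernel of `A' → (R'/𝔪'^{i+1}) ⊗_R A` lies in `𝔪'^{i+1} A'`. This rests on `𝔪'` being
finitely generated: an element of the kernel is a convergent sum, which has to be rewritten as a
finite combination of generators of `𝔪'^{i+1}`. -/
theorem bc_mem_smul_of_apply_eq_zero [IsNoetherianRing R'] (x : ↥(bcLimit R R' A)) (i : ℕ)
    (hx : x.1 i = 0) :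
    x ∈ (maximalIdeal R' ^ (i + 1) • ⊤ : Submodule R' ↥(bcLimit R R' A)) := by
  obtain ⟨y, rfl⟩ := (bcEquiv R R' A).surjective x
  have hy : y ∈ (AdicCompletion.eval (maximalIdeal R') (R' ⊗[R] A) (i + 1)).ker := by
    rw [LinearMap.mem_ker, AdicCompletion.eval_apply]
    exact (LinearEquiv.map_eq_zero_iff (bcE R R' A i).symm).1 hx
  rw [← AdicCompletion.pow_smul_top_eq_ker_eval (IsNoetherian.noetherian _)] at hy
  have := Submodule.mem_map_of_mem (f := (bcEquiv R R' A).toLinearMap) hy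
  rw [Submodule.map_smul''] at this
  exact Submodule.smul_mono le_rfl le_top this

lemma bc_eval_surjective (i : ℕ) (t : BCLevel R R' A i) : ∃ x : ↥(bcLimit R R' A), x.1 i = t := by
  obtain ⟨b, rfl⟩ := bcT_surjective R R' A i t
  exact ⟨bcToLimit R R' A (AdicCompletion.of _ _ b), rfl⟩

end BaseChange

/-! ### Base change of brackets -/

section Bracket
variable {R A : Type} [CommRing R] [CommRing A] [Algebra R A]

/-- The `S`-bilinear extension `(s ⊗ a, t ⊗ b) ↦ st ⊗ {a, b}` to `S ⊗_R A` of an `R`-bilinear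
bracket on `A`. -/
noncomputable def brExt (S : Type) [CommRing S] [Algebra R S] (P : A →ₗ[R] A →ₗ[R] A) :
    S ⊗[R] A →ₗ[R] S ⊗[R] A →ₗ[R] S ⊗[R] A :=
  TensorProduct.map₂ (LinearMap.mul R S) P

variable (S : Type) [CommRing S] [Algebra R S] (P : A →ₗ[R] A →ₗ[R] A)

@[simp] lemma brExt_tmul (s t : S) (a b : A) :
    brExt S P (s ⊗ₜ a) (t ⊗ₜ b) = (s * t) ⊗ₜ P a b := rfl

lemma brExt_smul_left (s : S) (x y : S ⊗[R] A) :
    brExt S P ((s ⊗ₜ 1) * x) y = (s ⊗ₜ 1) * brExt S P x y := by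
  induction x with
  | zero => simp
  | add x x' hx hx' => simp only [mul_add, map_add, LinearMap.add_apply, hx, hx']
  | tmul t a =>
    induction y with
    | zero => simp
    | add y y' hy hy' => simp only [map_add, mul_add, hy, hy']
    | tmul u b => simp [mul_assoc]

lemma brExt_anti (hanti : ∀ a b, P a b = - P b a) (x y : S ⊗[R] A) :
    brExt S P x y = - brExt S P y x := by
  induction x with
  | zero => simp
  | add x x' hx hx' => simp only [map_add, LinearMap.add_apply, hx, hx', neg_add]
  | tmul t a =>
    induction y with
    | zero => simp
    | add y y' hy hy' => simp only [map_add, LinearMap.add_apply, hy, hy', neg_add]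
    | tmul u b => rw [brExt_tmul, brExt_tmul, hanti, tmul_neg, mul_comm]

lemma brExt_jacobi (hjac : ∀ a b c, P a (P b c) + P b (P c a) + P c (P a b) = 0)
    (x y z : S ⊗[R] A) :
    brExt S P x (brExt S P y z) + brExt S P y (brExt S P z x) + brExt S P z (brExt S P x y)
      = 0 := by
  induction x with
  | zero => simp
  | add x x' hx hx' =>
    rw [← add_zero (0 : S ⊗[R] A)]
    nth_rewrite 1 [← hx]
    rw [← hx']
    simp only [map_add, LinearMap.add_apply]
    abel
  | tmul s a =>
    induction y with
    | zero => simp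
    | add x x' hx hx' =>
      rw [← add_zero (0 : S ⊗[R] A)]
      nth_rewrite 1 [← hx]
      rw [← hx']
      simp only [map_add, LinearMap.add_apply]
      abel
    | tmul t b =>
      induction z with
      | zero => simp
      | add x x' hx hx' =>
        rw [← add_zero (0 : S ⊗[R] A)]
        nth_rewrite 1 [← hx]
        rw [← hx']
        simp only [map_add, LinearMap.add_apply]
        abel
      | tmul u c =>
        simp only [brExt_tmul]
        rw [show t * (u * s) = s * (t * u) by ring, show u * (s * t) = s * (t * u) by ring,
          ← tmul_add, ← tmul_add, hjac, tmul_zero]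

lemma brExt_leibniz (hleib : ∀ a b c, P (a * b) c = P a c * b + a * P b c) (x y z : S ⊗[R] A) :
    brExt S P (x * y) z = brExt S P x z * y + x * brExt S P y z := by
  induction x with
  | zero => simp
  | add x x' hx hx' =>
    simp only [add_mul, map_add, LinearMap.add_apply, hx, hx']
    abel
  | tmul s a =>
    induction y with
    | zero => simp
    | add x x' hx hx' =>
      simp only [mul_add, map_add, LinearMap.add_apply, hx, hx']
      abel
    | tmul t b =>
      induction z with
      | zero => simp
      | add x x' hx hx' =>
        simp only [map_add, hx, hx', mul_add, add_mul]
        abel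
      | tmul u c =>
        simp only [brExt_tmul, Algebra.TensorProduct.tmul_mul_tmul, hleib, tmul_add]
        rw [show s * u * t = s * t * u by ring, show s * (t * u) = s * t * u by ring]

/-- The extended brackets are natural in the coefficient ring. -/
lemma brExt_map {S S' : Type} [CommRing S] [Algebra R S] [CommRing S'] [Algebra R S']
    (φ : S →ₐ[R] S') (x y : S ⊗[R] A) :
    Algebra.TensorProduct.map φ (AlgHom.id R A) (brExt S P x y) =
      brExt S' P (Algebra.TensorProduct.map φ (AlgHom.id R A) x)
        (Algebra.TensorProduct.map φ (AlgHom.id R A) y) := by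
  induction x with
  | zero => simp
  | add x x' hx hx' => simp only [map_add, LinearMap.add_apply, hx, hx']
  | tmul t a =>
    induction y with
    | zero => simp
    | add y y' hy hy' => simp only [map_add, hy, hy']
    | tmul u b => simp

end Bracket

section LimitBracket
variable {R R' A}

lemma bc_ext {x y : ↥(bcLimit R R' A)} (h : ∀ i, x.1 i = y.1 i) : x = y :=
  Subtype.ext (funext h)

/-- The bracket on `A'` given at each level by the base-changed bracket `brExt`. -/
noncomputable def bcBracket (P : A →ₗ[R] A →ₗ[R] A) (x y : ↥(bcLimit R R' A)) :
    ↥(bcLimit R R' A) :=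
  ⟨fun i => brExt _ P (x.1 i) (y.1 i), fun i => by
    have := brExt_map P (Ideal.Quotient.liftₐ (maximalIdeal R' ^ (i + 1 + 1))
      (Ideal.Quotient.mkₐ R (maximalIdeal R' ^ (i + 1)))
      (fun a ha => by
        rw [Ideal.Quotient.mkₐ_eq_mk, Ideal.Quotient.eq_zero_iff_mem]
        exact Ideal.pow_le_pow_right (Nat.le_succ _) ha)) (x.1 (i + 1)) (y.1 (i + 1))
    refine this.trans ?_
    exact congrArg₂ (fun s t => brExt _ P s t) (x.2 i) (y.2 i)⟩

lemma bcBracket_apply (P : A →ₗ[R] A →ₗ[R] A) (x y : ↥(bcLimit R R' A)) (i : ℕ) :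
    (bcBracket P x y).1 i = brExt _ P (x.1 i) (y.1 i) := rfl

lemma bcBracket_isInduced (P : A →ₗ[R] A →ₗ[R] A) (hanti : ∀ a b, P a b = - P b a)
    (hjac : ∀ a b c, P a (P b c) + P b (P c a) + P c (P a b) = 0)
    (hleib : ∀ a b c, P (a * b) c = P a c * b + a * P b c) :
    IsInducedPoissonBracket (bcθ R R' A) (bcρ R R' A) (fun a b => P a b) (bcBracket P) := by
  have anti (x y : ↥(bcLimit R R' A)) : bcBracket P x y = - bcBracket P y x :=
    bc_ext fun i => brExt_anti _ P hanti _ _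
  have addl (x y z : ↥(bcLimit R R' A)) :
      bcBracket P (x + y) z = bcBracket P x z + bcBracket P y z :=
    bc_ext fun i => LinearMap.map_add₂ (brExt _ P) _ _ _
  have smull (r : R') (x y : ↥(bcLimit R R' A)) :
      bcBracket P (bcθ R R' A r * x) y = bcθ R R' A r * bcBracket P x y :=
    bc_ext fun i => brExt_smul_left _ P _ _ _
  have leibl (x y z : ↥(bcLimit R R' A)) :
      bcBracket P (x * y) z = bcBracket P x z * y + x * bcBracket P y z :=
    bc_ext fun i => brExt_leibniz _ P hleib _ _ _
  refine ⟨addl, fun x y z => ?_, smull, fun r x y => ?_, anti, fun x y z =>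
    bc_ext fun i => brExt_jacobi _ P hjac _ _ _, leibl, fun x y z => ?_, fun a b => ?_⟩
  · rw [anti, addl, anti x y, anti x z, neg_add]
  · rw [anti, smull, anti x y]
    ring
  · rw [anti, leibl, anti x y, anti x z]
    ring
  · refine bc_ext fun i => ?_
    rw [bcBracket_apply, bcρ_apply, bcρ_apply, bcρ_apply, brExt_tmul, one_mul]

/-- An additive, `R'`-linear in `x`, operation `Q x y` on `A'` kills level `i` whenever `x` does,
because then `x ∈ 𝔪'^{i+1} A'`. Hence level `i` of `Q x y` depends only on level `i` of `x`, and is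
determined by the values at `x = ρ a`. -/
lemma induced_apply_of_right [IsNoetherianRing R'] (P : A →ₗ[R] A →ₗ[R] A)
    {Q : ↥(bcLimit R R' A) → ↥(bcLimit R R' A) → ↥(bcLimit R R' A)}
    (hadd : ∀ x y z, Q (x + y) z = Q x z + Q y z)
    (hsmul : ∀ (r' : R') (x y), Q (bcθ R R' A r' * x) y = bcθ R R' A r' * Q x y)
    (i : ℕ) (y : ↥(bcLimit R R' A))
    (hy : ∀ a : A, (Q (bcρ R R' A a) y).1 i = brExt _ P (1 ⊗ₜ a) (y.1 i))
    (x : ↥(bcLimit R R' A)) : (Q x y).1 i = brExt _ P (x.1 i) (y.1 i) := by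
  have hzero : ∀ x : ↥(bcLimit R R' A), x.1 i = 0 → (Q x y).1 i = 0 := by
    intro x hx
    let _ := bcModule R R' A
    have hx' := bc_mem_smul_of_apply_eq_zero R R' A x i hx
    clear hx
    induction hx' using Submodule.smul_induction_on' with
    | smul r hr z _ =>
      rw [bc_smul_def, hsmul]
      change (bcθ R R' A r).1 i * (Q z y).1 i = 0
      rw [bcθ_apply, Ideal.Quotient.eq_zero_iff_mem.2 hr, zero_tmul, zero_mul]
    | add u _ v _ hu hv =>
      rw [hadd]
      change (Q u y).1 i + (Q v y).1 i = 0
      rw [hu, hv, add_zero]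
  have hcongr : ∀ x x' : ↥(bcLimit R R' A), x.1 i = x'.1 i → (Q x y).1 i = (Q x' y).1 i := by
    intro x x' h
    have h1 := hadd (x - x') x' y
    rw [sub_add_cancel] at h1
    rw [h1]
    change (Q (x - x') y).1 i + (Q x' y).1 i = _
    rw [hzero _ (show x.1 i - x'.1 i = 0 from sub_eq_zero.2 h), zero_add]
  generalize hxt : x.1 i = t
  induction t using TensorProduct.induction_on generalizing x with
  | zero => rw [hzero x hxt, LinearMap.map_zero₂]
  | add t₁ t₂ h₁ h₂ =>
    obtain ⟨x₁, hx₁⟩ := bc_eval_surjective R R' A i t₁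
    obtain ⟨x₂, hx₂⟩ := bc_eval_surjective R R' A i t₂
    rw [hcongr x (x₁ + x₂) (by rw [hxt, ← hx₁, ← hx₂]; rfl), hadd]
    change (Q x₁ y).1 i + (Q x₂ y).1 i = _
    rw [h₁ x₁ hx₁, h₂ x₂ hx₂, LinearMap.map_add₂]
  | tmul s a =>
    obtain ⟨r, rfl⟩ := Ideal.Quotient.mk_surjective s
    have h0 : (Ideal.Quotient.mk (maximalIdeal R' ^ (i + 1)) r) ⊗ₜ[R] a =
        (Ideal.Quotient.mk (maximalIdeal R' ^ (i + 1)) r) ⊗ₜ[R] (1 : A) * 1 ⊗ₜ a := by simp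
    rw [hcongr x (bcθ R R' A r * bcρ R R' A a) (hxt.trans h0), hsmul, h0, brExt_smul_left, ← hy]
    rfl

/-- Uniqueness: `induced_apply_of_right` is used twice, once in each variable, with antisymmetry
exchanging the two, and this reduces to the values of `Q` on pairs `(ρ a, ρ b)`. -/
theorem induced_eq_bcBracket [IsNoetherianRing R'] (P : A →ₗ[R] A →ₗ[R] A)
    (hanti : ∀ a b, P a b = - P b a)
    (Q : ↥(bcLimit R R' A) → ↥(bcLimit R R' A) → ↥(bcLimit R R' A))
    (hQ : IsInducedPoissonBracket (bcθ R R' A) (bcρ R R' A) (fun a b => P a b) Q) :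
    Q = bcBracket P := by
  obtain ⟨hadd, -, hsmul, -, hQanti, -, -, -, hρ⟩ := hQ
  funext x y
  refine bc_ext fun i => ?_
  refine induced_apply_of_right P hadd hsmul i y (fun a => ?_) x
  rw [hQanti, brExt_anti _ P hanti]
  refine congrArg Neg.neg ?_
  refine induced_apply_of_right P hadd hsmul i (bcρ R R' A a) (fun b => ?_) y
  rw [← hρ, bcρ_apply, bcρ_apply, brExt_tmul, one_mul]

end LimitBracket

/-! ### The augmentation -/

section Augmentation

/-- A `K`-algebra homomorphism `R → R'` is local as soon as `R'` has residue field `K`. Write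
`σ r = k + m'` with `m' ∈ 𝔪'`; if `k ≠ 0`, then `k - r` is a unit of `R` which maps into `𝔪'`. -/
lemma algebraMap_mem_maximalIdeal (K : Type) [Field K] [IsLocalRing R] [Algebra K R]
    [Algebra K R'] [IsScalarTower K R R']
    (hres' : Function.Surjective (algebraMap K (R' ⧸ maximalIdeal R'))) {r : R}
    (hr : r ∈ maximalIdeal R) : algebraMap R R' r ∈ maximalIdeal R' := by
  obtain ⟨k, hk⟩ := hres' (Ideal.Quotient.mk _ (algebraMap R R' r))
  have hm : algebraMap K R' k - algebraMap R R' r ∈ maximalIdeal R' := Ideal.Quotient.eq.1 hk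
  by_cases h0 : k = 0
  · simpa [h0] using hm
  · have hu : IsUnit (algebraMap K R k - r) := by
      by_contra hn
      have h1 := add_mem ((mem_maximalIdeal _).2 hn) hr
      rw [sub_add_cancel] at h1
      exact (mem_maximalIdeal _).1 h1 ((IsUnit.mk0 k h0).map (algebraMap K R))
    rw [IsScalarTower.algebraMap_apply K R R', ← map_sub] at hm
    exact absurd (hu.map (algebraMap R R')) ((mem_maximalIdeal _).1 hm)

/-- As `R'/𝔪' = K`, every element of the level `(R'/𝔪') ⊗_R A` is of the form `1 ⊗ a`. -/
lemma exists_one_tmul (K : Type) [Field K] [Algebra K R]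
    [Algebra K R'] [IsScalarTower K R R']
    (hres' : Function.Surjective (algebraMap K (R' ⧸ maximalIdeal R')))
    (t : BCLevel R R' A 0) : ∃ a : A, t = 1 ⊗ₜ a := by
  induction t using TensorProduct.induction_on with
  | zero => exact ⟨0, (tmul_zero _ _).symm⟩
  | add x y hx hy =>
    obtain ⟨a, rfl⟩ := hx
    obtain ⟨b, rfl⟩ := hy
    exact ⟨a + b, (tmul_add _ _ _).symm⟩
  | tmul s a =>
    obtain ⟨r', rfl⟩ := Ideal.Quotient.mk_surjective s
    obtain ⟨k, hk⟩ := hres' (Ideal.Quotient.mk _ r')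
    have hm : algebraMap K R' k - r' ∈ maximalIdeal R' := Ideal.Quotient.eq.1 hk
    refine ⟨algebraMap K R k • a, ?_⟩
    rw [← smul_tmul]
    congr 1
    rw [Algebra.smul_def, mul_one, ← Ideal.Quotient.mk_algebraMap,
      ← IsScalarTower.algebraMap_apply K R R', eq_comm, Ideal.Quotient.eq, zero_add, pow_one]
    exact hm

/-- The canonical identification of `(R'/𝔪') ⊗_R A` with `C`, as an injective homomorphism
extending `π`. It is `κ ⊗ π` with `κ : R'/𝔪' = K → C`; here `κ` is `R`-linear because `R = K + 𝔪`,
`σ 𝔪 ⊆ 𝔪'` and `π` kills `𝔪A`. -/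
lemma exists_augmentation (K : Type) [Field K] [IsLocalRing R] [Algebra K R] [Algebra K R']
    [IsScalarTower K R R'] (C : Type) [CommRing C] [Algebra K C] [Algebra K A]
    [IsScalarTower K R A]
    (hres : Function.Surjective (algebraMap K (R ⧸ maximalIdeal R)))
    (hres' : Function.Bijective (algebraMap K (R' ⧸ maximalIdeal R')))
    (π : A →ₐ[K] C)
    (hker : ∀ a : A, π a = 0 ↔ a ∈ (maximalIdeal R • ⊤ : Submodule R A)) :
    ∃ π₀ : BCLevel R R' A 0 →+* C,
      (∀ a : A, π₀ (1 ⊗ₜ a) = π a) ∧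
      (∀ k : K, π₀ (Ideal.Quotient.mk _ (algebraMap K R' k) ⊗ₜ 1) = algebraMap K C k) ∧
      ∀ t, π₀ t = 0 → t = 0 := by
  have hloc {r : R} (hr : r ∈ maximalIdeal R) : algebraMap R R' r ∈ maximalIdeal R' :=
    algebraMap_mem_maximalIdeal R R' K hres'.surjective hr
  let _ : Algebra R C := (π.toRingHom.comp (algebraMap R A)).toAlgebra
  let e : K ≃+* (R' ⧸ maximalIdeal R') := RingEquiv.ofBijective _ hres'
  let κ₀ : R' ⧸ (maximalIdeal R' ^ (0 + 1)) →+* C := ((algebraMap K C).comp e.symm.toRingHom).comp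
    (Ideal.Quotient.factor (show maximalIdeal R' ^ (0 + 1) ≤ maximalIdeal R' by
      rw [zero_add, pow_one]))
  have hκ (k : K) : κ₀ (Ideal.Quotient.mk _ (algebraMap K R' k)) = algebraMap K C k := by
    change algebraMap K C (e.symm (e k)) = _
    rw [e.symm_apply_apply]
  have hκm {m : R'} (hm : m ∈ maximalIdeal R') : κ₀ (Ideal.Quotient.mk _ m) = 0 := by
    change algebraMap K C (e.symm (Ideal.Quotient.mk _ m)) = 0
    rw [Ideal.Quotient.eq_zero_iff_mem.2 hm, map_zero, map_zero]
  let κ : R' ⧸ (maximalIdeal R' ^ (0 + 1)) →ₐ[R] C :=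
    { κ₀ with
      commutes' := fun r => by
        obtain ⟨k, hk⟩ := hres (Ideal.Quotient.mk _ r)
        have hm : algebraMap K R k - r ∈ maximalIdeal R := Ideal.Quotient.eq.1 hk
        have h1 : κ₀ (Ideal.Quotient.mk _ (algebraMap R R' r)) = algebraMap K C k := by
          rw [← hκ k, eq_comm, ← sub_eq_zero, ← map_sub, ← map_sub,
            IsScalarTower.algebraMap_apply K R R', ← map_sub]
          exact hκm (hloc hm)
        have h2 : π (algebraMap R A r) = algebraMap K C k := by
          rw [← π.commutes k, eq_comm, ← sub_eq_zero, ← map_sub, hker,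
            IsScalarTower.algebraMap_apply K R A, ← map_sub, Algebra.algebraMap_eq_smul_one]
          exact Submodule.smul_mem_smul hm trivial
        exact h1.trans h2.symm }
  let πR : A →ₐ[R] C := { π.toRingHom with commutes' := fun _ => rfl }
  let π₀ : BCLevel R R' A 0 →ₐ[R] C := Algebra.TensorProduct.lift κ πR fun _ _ => .all _ _
  have h1 (a : A) : π₀ (1 ⊗ₜ a) = π a := by
    have : π₀ (1 ⊗ₜ a) = κ 1 * πR a := Algebra.TensorProduct.lift_tmul ..
    rw [this, map_one, one_mul]
    rfl
  refine ⟨π₀.toRingHom, h1, fun k => ?_, fun t ht => ?_⟩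
  · have : π₀ (Ideal.Quotient.mk _ (algebraMap K R' k) ⊗ₜ 1) =
      κ (Ideal.Quotient.mk _ (algebraMap K R' k)) * πR 1 := Algebra.TensorProduct.lift_tmul ..
    refine this.trans ?_
    rw [map_one, mul_one]
    exact hκ k
  · obtain ⟨a, rfl⟩ := exists_one_tmul R R' A K hres'.surjective t
    -- `π a = 0` puts `a` in `𝔪A`, and scalars from `𝔪` act as zero on `R'/𝔪'`.
    have ha := (hker a).1 ((h1 a).symm.trans ht)
    clear ht
    induction ha using Submodule.smul_induction_on' with
    | add x _ y _ hx hy => rw [tmul_add, hx, hy, add_zero]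
    | smul r hr z _ =>
      have : algebraMap R (R' ⧸ maximalIdeal R' ^ (0 + 1)) r = 0 :=
        Ideal.Quotient.eq_zero_iff_mem.2 (by rw [zero_add, pow_one]; exact hloc hr)
      rw [← smul_tmul, Algebra.smul_def, this, zero_mul, zero_tmul]

end Augmentation

/-! ### The induced deformation -/

/-- Let `σ : R → R'` be a `K`-algebra homomorphism of parameter `K`-algebras
(encoded here by `[Algebra R R']` and `[IsScalarTower K R R']`), `C` a commutative `K`-algebra
and `(A, {-,-}, π)` a Poisson `R`-deformation of `C`.  Then
`A' := lim_i (R'/𝔪'^{i+1}) ⊗_R A` is a commutative `R'`-algebra, flat and `𝔪'`-adically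
complete, with canonical augmentation to `C`, and it carries a unique `R'`-bilinear Poisson
bracket such that the canonical homomorphism `A → A'` preserves brackets; with this bracket `A'`
is a Poisson `R'`-deformation of `C`. -/
theorem statement7
    (K : Type) [Field K]
    (R : Type) [CommRing R] [Algebra K R] [IsNoetherianRing R] [IsLocalRing R]
    (hRcomp : IsAdicComplete (maximalIdeal R) R)
    (hres : Function.Bijective (algebraMap K (R ⧸ maximalIdeal R)))
    (R' : Type) [CommRing R'] [Algebra K R'] [IsNoetherianRing R'] [IsLocalRing R']
    (hR'comp : IsAdicComplete (maximalIdeal R') R')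
    (hres' : Function.Bijective (algebraMap K (R' ⧸ maximalIdeal R')))
    [Algebra R R'] [IsScalarTower K R R']
    (C : Type) [CommRing C] [Algebra K C]
    -- a Poisson R-deformation (A, {-,-}, π) of C:
    (A : Type) [CommRing A] [Algebra K A] [Algebra R A] [IsScalarTower K R A]
    (hflat : Module.Flat R A) (hcomp : IsAdicComplete (maximalIdeal R) A)
    (P : A → A → A)
    (haddl : ∀ a b c : A, P (a + b) c = P a c + P b c)
    (haddr : ∀ a b c : A, P a (b + c) = P a b + P a c)
    (hsmull : ∀ (r : R) (a b : A), P (r • a) b = r • P a b)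
    (hsmulr : ∀ (r : R) (a b : A), P a (r • b) = r • P a b)
    (hanti : ∀ a b : A, P a b = - P b a)
    (hjac : ∀ a b c : A, P a (P b c) + P b (P c a) + P c (P a b) = 0)
    (hleibl : ∀ a b c : A, P (a * b) c = P a c * b + a * P b c)
    (hleibr : ∀ a b c : A, P a (b * c) = P a b * c + b * P a c)
    (π : A →ₐ[K] C) (hsurj : Function.Surjective π)
    (hker : ∀ a : A, π a = 0 ↔ a ∈ (maximalIdeal R • ⊤ : Submodule R A))
    (hP0 : ∀ a b : A, π (P a b) = 0) :
    ∃ (θ : R' →+* ↥(bcLimit R R' A)) (ρ : A →+* ↥(bcLimit R R' A))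
      (π' : ↥(bcLimit R R' A) →+* C),
      -- θ is the canonical structural homomorphism making A' a commutative R'-algebra:
      (∀ (r' : R') (i : ℕ),
        ((θ r' : ∀ j, BCLevel R R' A j) i)
          = (Ideal.Quotient.mk (maximalIdeal R' ^ (i + 1)) r') ⊗ₜ[R] (1 : A)) ∧
      -- ρ is the canonical map A → A', and it is an R-algebra homomorphism:
      (∀ (a : A) (i : ℕ),
        ((ρ a : ∀ j, BCLevel R R' A j) i)
          = (1 : R' ⧸ (maximalIdeal R' ^ (i + 1))) ⊗ₜ[R] a) ∧
      (∀ r : R, ρ (algebraMap R A r) = θ (algebraMap R R' r)) ∧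
      -- A' is flat and 𝔪'-adically complete as an R'-module:
      (@Module.Flat R' ↥(bcLimit R R' A) _ _ (Module.compHom _ θ)) ∧
      (@IsAdicComplete R' _ (maximalIdeal R') ↥(bcLimit R R' A) _ (Module.compHom _ θ)) ∧
      -- π' is the canonical augmentation A' → C: K-linear, compatible with π, surjective,
      -- with kernel 𝔪'A':
      (∀ k : K, π' (θ (algebraMap K R' k)) = algebraMap K C k) ∧
      (∀ a : A, π' (ρ a) = π a) ∧
      Function.Surjective π' ∧
      (∀ x : ↥(bcLimit R R' A), π' x = 0 ↔
        x ∈ AddSubgroup.closure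
          {y : ↥(bcLimit R R' A) | ∃ m' ∈ maximalIdeal R', ∃ z, y = θ m' * z}) ∧
      -- A' carries a unique R'-bilinear Poisson bracket Q such that ρ preserves brackets,
      ∃ Q : ↥(bcLimit R R' A) → ↥(bcLimit R R' A) → ↥(bcLimit R R' A),
        IsInducedPoissonBracket θ ρ P Q ∧
        (∀ Q', IsInducedPoissonBracket θ ρ P Q' → Q' = Q) ∧
        -- and with this bracket (A', Q, π') is a Poisson R'-deformation of C:
        (∀ x y, π' (Q x y) = 0) := by

  obtain ⟨π₀, hπ1, hπK, hπinj⟩ :=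
    exists_augmentation R R' A K C hres.surjective hres' π hker
  let π' : ↥(bcLimit R R' A) →+* C :=
    (π₀.comp (Pi.evalRingHom (fun i => BCLevel R R' A i) 0)).comp (bcLimit R R' A).subtype
  have hπ' (x : ↥(bcLimit R R' A)) : π' x = π₀ (x.1 0) := rfl
  have hρ (a : A) : π' (bcρ R R' A a) = π a := hπ1 a
  let Plin : A →ₗ[R] A →ₗ[R] A := LinearMap.mk₂ R P haddl hsmull haddr hsmulr
  refine ⟨bcθ R R' A, bcρ R R' A, π', bcθ_apply R R' A, bcρ_apply R R' A, fun r => ?_,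
    bc_flat R R' A, bc_complete R R' A, hπK, hρ, fun c => ?_, fun x => ⟨fun hx => ?_, fun hx => ?_⟩,
    bcBracket Plin, bcBracket_isInduced Plin hanti hjac hleibl,
    fun Q' hQ' => induced_eq_bcBracket Plin hanti Q' hQ', fun x y => ?_⟩
  · refine bc_ext fun i => ?_
    rw [bcρ_apply, bcθ_apply, Algebra.algebraMap_eq_smul_one, ← smul_tmul, Algebra.smul_def,
      mul_one]
    rfl
  · obtain ⟨a, rfl⟩ := hsurj c
    exact ⟨_, hρ a⟩
  · let _ := bcModule R R' A
    have h := bc_mem_smul_of_apply_eq_zero R R' A x 0 (hπinj _ hx)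
    rw [zero_add, pow_one] at h
    clear hx
    induction h using Submodule.smul_induction_on' with
    | smul r hr z _ => exact AddSubgroup.subset_closure ⟨r, hr, z, rfl⟩
    | add u _ v _ hu hv => exact add_mem hu hv
  · induction hx using AddSubgroup.closure_induction with
    | mem y hy =>
      obtain ⟨m, hm, z, rfl⟩ := hy
      have h0 : (bcθ R R' A m).1 0 = 0 := by
        rw [bcθ_apply, Ideal.Quotient.eq_zero_iff_mem.2 (by rwa [zero_add, pow_one]), zero_tmul]
      rw [map_mul, hπ', h0, map_zero, zero_mul]
    | zero => exact map_zero _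
    | add u v _ _ hu hv => rw [map_add, hu, hv, add_zero]
    | neg u _ hu => rw [map_neg, hu, neg_zero]
  · obtain ⟨a, ha⟩ := exists_one_tmul R R' A K hres'.surjective (x.1 0)
    obtain ⟨b, hb⟩ := exists_one_tmul R R' A K hres'.surjective (y.1 0)
    rw [hπ', bcBracket_apply, ha, hb, brExt_tmul, one_mul, hπ1]
    exact hP0 a b
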